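/- Fix an integer N ≥ 2, t ∈ [0,1], n ≥ 1 and integers a_1, …, a_n all ≥ N. Let s^t_{N,n} be defined recursively by s^t_{N,0} = t and s^t_{N,k} = 1 − N/(a_k + s^t_{N,k−1}). Then for every Borel set C ⊆ [0,1], ρ^t_N(R_N^{−n}(C) ∩ I(a_1,…,a_n)) = ρ^t_N(I(a_1,…,a_n)) · ρ^{s^t_{N,n}}_N(C). -/

import Mathlib

open MeasureTheory Set Real Filter

/-- The Rényi-type continued fraction map `R_N`. -/
noncomputable def RN (N : ℕ) (x : ℝ) : ℝ :=
  if x = 1 then 0 else (N : ℝ) / (1 - x) - ⌊(N : ℝ) / (1 - x)⌋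

/-- `digit N k x` is the `(k+1)`-st digit `a_{k+1}(x)`. -/
noncomputable def digit (N k : ℕ) (x : ℝ) : ℤ :=
  ⌊(N : ℝ) / (1 - (RN N)^[k] x)⌋

/-- The cylinder `I(a_1, …, a_n)`. -/
def cyl (N n : ℕ) (a : ℕ → ℤ) : Set ℝ :=
  {x | x ∈ Set.Icc (0 : ℝ) 1 ∧ Irrational x ∧ ∀ k < n, digit N k x = a k}

/-- The conditional probability measure `ρ^t_N`, with density
`N(N-1+t)/[N-(1-x)(1-t)]²` on `[0,1]`. -/
noncomputable def rhoT (N : ℕ) (t : ℝ) : Measure ℝ :=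
  (volume.restrict (Set.Icc (0 : ℝ) 1)).withDensity fun x =>
    ENNReal.ofReal ((N : ℝ) * ((N : ℝ) - 1 + t) / ((N : ℝ) - (1 - x) * (1 - t)) ^ 2)

/-- `s^t_{N,k}` built from a prescribed digit sequence `a`. -/
noncomputable def sRec (N : ℕ) (t : ℝ) (a : ℕ → ℤ) : ℕ → ℝ
  | 0 => t
  | k + 1 => 1 - (N : ℝ) / ((a k : ℝ) + sRec N t a k)

/-- density -/
noncomputable def rdens (N : ℕ) (t : ℝ) (x : ℝ) : ℝ :=
  (N : ℝ) * ((N : ℝ) - 1 + t) / ((N : ℝ) - (1 - x) * (1 - t)) ^ 2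

lemma rdens_meas (N : ℕ) (t : ℝ) : Measurable (fun x => ENNReal.ofReal (rdens N t x)) := by
  unfold rdens
  fun_prop

lemma rhoT_apply (N : ℕ) (t : ℝ) (S : Set ℝ) (hS : MeasurableSet S) (hS1 : S ⊆ Set.Icc (0 : ℝ) 1) :
    rhoT N t S = ∫⁻ x in S, ENNReal.ofReal (rdens N t x) := by
  unfold rhoT
  rw [withDensity_apply _ hS, Measure.restrict_restrict hS, inter_eq_left.mpr hS1]
  rfl

lemma meas_irr : MeasurableSet {x : ℝ | Irrational x} := by
  have : {x : ℝ | Irrational x} = (Set.range ((↑) : ℚ → ℝ))ᶜ := rfl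
  rw [this]
  exact (Set.countable_range _).measurableSet.compl

lemma RN_meas (N : ℕ) : Measurable (RN N) := by
  unfold RN
  refine Measurable.ite (measurableSet_singleton 1) measurable_const ?_
  have h : Measurable (fun x : ℝ => (N : ℝ) / (1 - x)) := by fun_prop
  exact h.sub ((measurable_from_top (f := fun z : ℤ => (z : ℝ))).comp (Int.measurable_floor.comp h))

/-- one-step set -/
def stepSet (N : ℕ) (a : ℤ) (C : Set ℝ) : Set ℝ :=
  {x | x ∈ Set.Icc (0 : ℝ) 1 ∧ Irrational x ∧ ⌊(N : ℝ) / (1 - x)⌋ = a ∧ RN N x ∈ C}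

lemma stepSet_meas (N : ℕ) (a : ℤ) (C : Set ℝ) (hC : MeasurableSet C) :
    MeasurableSet (stepSet N a C) := by
  have h : Measurable (fun x : ℝ => ⌊(N : ℝ) / (1 - x)⌋) :=
    Int.measurable_floor.comp (by fun_prop)
  exact measurableSet_Icc.inter (meas_irr.inter
    ((h (measurableSet_singleton a)).inter (RN_meas N hC)))

lemma RN_irr (N : ℕ) (hN : 2 ≤ N) (x : ℝ) (hx : Irrational x) :
    RN N x ∈ Set.Icc (0 : ℝ) 1 ∧ Irrational (RN N x) := by
  have hN' : (N : ℝ) ≠ 0 := by positivity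
  have h1 : x ≠ 1 := hx.ne_one
  have h1' : 1 - x ≠ 0 := sub_ne_zero.mpr h1.symm
  unfold RN
  rw [if_neg h1]
  refine ⟨⟨Int.fract_nonneg _, (Int.fract_lt_one ((N : ℝ) / (1 - x))).le⟩, ?_⟩
  rintro ⟨q, hq⟩
  refine hx ⟨1 - N / (⌊(N : ℝ) / (1 - x)⌋ + q), ?_⟩
  push_cast
  rw [hq]
  have : (⌊(N : ℝ) / (1 - x)⌋ : ℝ) + ((N : ℝ) / (1 - x) - ⌊(N : ℝ) / (1 - x)⌋) = N / (1 - x) := by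
    ring
  rw [this]
  field_simp
  ring

lemma stepSet_eq (N : ℕ) (hN : 2 ≤ N) (a : ℤ) (ha : (N : ℤ) ≤ a) (C : Set ℝ)
    (hC1 : C ⊆ Set.Icc (0 : ℝ) 1) :
    stepSet N a C = Set.image (fun y : ℝ => 1 - (N : ℝ) / (a + y)) (C ∩ {x | Irrational x}) := by
  have hN0 : (2 : ℝ) ≤ N := by exact_mod_cast hN
  have ha' : (N : ℝ) ≤ a := by exact_mod_cast ha
  have hN' : (N : ℝ) ≠ 0 := by positivity
  ext x
  constructor
  · rintro ⟨hx, hi, hf, hc⟩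
    refine ⟨RN N x, ⟨hc, (RN_irr N hN x hi).2⟩, ?_⟩
    have h1 : x ≠ 1 := hi.ne_one
    have h1' : 1 - x ≠ 0 := sub_ne_zero.mpr h1.symm
    simp only [RN, if_neg h1, hf]
    have : (a : ℝ) + ((N : ℝ) / (1 - x) - a) = N / (1 - x) := by ring
    rw [this]
    field_simp
    ring
  · rintro ⟨y, ⟨hc, hi⟩, rfl⟩
    have hy := hC1 hc
    have hi' : Irrational y := hi
    have hy1 : y < 1 := lt_of_le_of_ne hy.2 hi'.ne_one
    have hpos : 0 < (a : ℝ) + y := by linarith [hy.1]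
    have key : (N : ℝ) / (1 - (1 - (N : ℝ) / (a + y))) = a + y := by
      rw [sub_sub_cancel, div_div_cancel₀ hN']
    have hfl : ⌊(N : ℝ) / (1 - (1 - (N : ℝ) / (a + y)))⌋ = a := by
      rw [key, Int.floor_eq_iff]
      constructor <;> linarith [hy.1]
    have hdiv : (0:ℝ) < (N : ℝ) / (a + y) := by positivity
    refine ⟨⟨?_, ?_⟩, ?_, hfl, ?_⟩
    · have : (N : ℝ) / (a + y) ≤ 1 := by rw [div_le_one hpos]; linarith [hy.1]
      linarith
    · linarith
    · rintro ⟨q, hq⟩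
      refine hi' ⟨N / (1 - q) - a, ?_⟩
      push_cast
      rw [hq]
      rw [key]; ring
    · have hne : (1 - (N : ℝ) / (a + y)) ≠ 1 := by linarith
      simp only [RN, if_neg hne, hfl]
      rw [key]
      simpa using hc

lemma sstep_mem (N : ℕ) (hN : 2 ≤ N) (a : ℤ) (ha : (N : ℤ) ≤ a) (t : ℝ)
    (ht : t ∈ Set.Icc (0 : ℝ) 1) : 1 - (N : ℝ) / (a + t) ∈ Set.Icc (0 : ℝ) 1 := by
  have hN0 : (2 : ℝ) ≤ N := by exact_mod_cast hN
  have ha' : (N : ℝ) ≤ a := by exact_mod_cast ha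
  have hpos : 0 < (a : ℝ) + t := by linarith [ht.1]
  have h1 : (0:ℝ) < (N : ℝ) / (a + t) := by positivity
  have : (N : ℝ) / (a + t) ≤ 1 := by rw [div_le_one hpos]; linarith [ht.1]
  constructor <;> linarith

lemma one_step (N : ℕ) (hN : 2 ≤ N) (a : ℤ) (ha : (N : ℤ) ≤ a) (t : ℝ)
    (ht : t ∈ Set.Icc (0 : ℝ) 1) (C : Set ℝ) (hC : MeasurableSet C)
    (hC1 : C ⊆ Set.Icc (0 : ℝ) 1) :
    rhoT N t (stepSet N a C) = ENNReal.ofReal (((N : ℝ) - 1 + t) / ((a + t - 1) * (a + t))) *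
      rhoT N (1 - (N : ℝ) / (a + t)) C := by
  have hN0 : (2 : ℝ) ≤ N := by exact_mod_cast hN
  have ha' : (N : ℝ) ≤ a := by exact_mod_cast ha
  have hN' : (N : ℝ) ≠ 0 := by positivity
  have hat : (0:ℝ) < a + t := by linarith [ht.1]
  have hat1 : (0:ℝ) < a + t - 1 := by linarith [ht.1]
  have hD : MeasurableSet (C ∩ {x | Irrational x}) := hC.inter meas_irr
  have hDC : (C ∩ {x : ℝ | Irrational x} : Set ℝ) =ᵐ[volume] (C : Set ℝ) := by
    have h : ∀ᵐ x : ℝ ∂volume, Irrational x := by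
      have : (volume : Measure ℝ) (Set.range ((↑) : ℚ → ℝ)) = 0 :=
        (Set.countable_range _).measure_zero _
      rw [ae_iff]
      convert this using 2
      ext x
      simp [Irrational]
    filter_upwards [h] with x hx
    apply propext
    exact ⟨fun h => h.1, fun h => ⟨h, hx⟩⟩
  rw [rhoT_apply N t _ (stepSet_meas N a C hC) (fun x hx => hx.1), rhoT_apply N _ C hC hC1,
    stepSet_eq N hN a ha C hC1,
    lintegral_image_eq_lintegral_abs_deriv_mul hD (f' := fun y => (N : ℝ) / (a + y) ^ 2),
    ← setLIntegral_congr hDC, ← lintegral_const_mul _ (rdens_meas _ _)]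
  · refine setLIntegral_congr_fun hD ?_
    rintro y ⟨hc, -⟩
    have hy := hC1 hc
    have hay : (0:ℝ) < a + y := by linarith [hy.1]
    have hayt : (0:ℝ) < a + y - 1 + t := by linarith [hy.1, ht.1]
    simp only
    rw [← ENNReal.ofReal_mul (abs_nonneg _), ← ENNReal.ofReal_mul
      (div_nonneg (by linarith [ht.1]) (by positivity)), abs_of_nonneg (by positivity)]
    congr 1
    unfold rdens
    have e1 : (N : ℝ) - (1 - (1 - (N : ℝ) / (a + y))) * (1 - t)
        = N * (a + y - 1 + t) / (a + y) := by
      field_simp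
      ring
    have e2 : (N : ℝ) - (1 - y) * (1 - (1 - (N : ℝ) / (a + t)))
        = N * (a + y - 1 + t) / (a + t) := by
      field_simp
      ring
    have e3 : (N : ℝ) - 1 + (1 - (N : ℝ) / (a + t)) = N * (a + t - 1) / (a + t) := by
      field_simp
      ring
    rw [e1, e2, e3]
    field_simp
  · rintro y ⟨hc, -⟩
    have hy := hC1 hc
    have hay : (a:ℝ) + y ≠ 0 := by linarith [hy.1]
    have := ((hasDerivAt_const y (N : ℝ)).div ((hasDerivAt_id y).const_add (a : ℝ)) hay).const_sub 1
    refine (this.congr_deriv ?_).hasDerivWithinAt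
    simp only [id]
    ring
  · rintro y ⟨hc, -⟩ z ⟨hz, -⟩ h
    have hy := hC1 hc
    have hz := hC1 hz
    have hay : (a:ℝ) + y ≠ 0 := by linarith [hy.1]
    have haz : (a:ℝ) + z ≠ 0 := by linarith [hz.1]
    simp only at h
    have h2 : (N : ℝ) / (a + y) = N / (a + z) := by linarith
    rw [div_eq_div_iff hay haz] at h2
    have := mul_left_cancel₀ hN' h2
    linarith

lemma total_mass (N : ℕ) (hN : 2 ≤ N) (t : ℝ) (ht : t ∈ Set.Icc (0 : ℝ) 1) :
    rhoT N t (Set.Icc 0 1) = 1 := by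
  have hN0 : (2 : ℝ) ≤ N := by exact_mod_cast hN
  have hpos : ∀ x ∈ Set.Icc (0:ℝ) 1, 0 < (N : ℝ) - (1 - x) * (1 - t) := by
    intro x hx
    nlinarith [hx.1, hx.2, ht.1, ht.2, mul_nonneg hx.1 (sub_nonneg.2 ht.2)]
  have hcont : ContinuousOn (rdens N t) (Set.Icc 0 1) := by
    unfold rdens
    refine ContinuousOn.div (by fun_prop) (by fun_prop) ?_
    intro x hx
    exact pow_ne_zero _ (hpos x hx).ne'
  rw [rhoT_apply N t _ measurableSet_Icc subset_rfl, ← ofReal_integral_eq_lintegral_ofReal]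
  · rw [integral_Icc_eq_integral_Ioc, ← intervalIntegral.integral_of_le zero_le_one,
      intervalIntegral.integral_eq_sub_of_hasDerivAt
        (f := fun x => (N : ℝ) * x / ((N : ℝ) - (1 - x) * (1 - t)))]
    · have : (N : ℝ) ≠ 0 := by positivity
      simp [this]
    · intro x hx
      rw [uIcc_of_le zero_le_one] at hx
      have h1 : HasDerivAt (fun x : ℝ => (N : ℝ) * x) N x := by
        simpa using (hasDerivAt_id x).const_mul (N : ℝ)
      have h2 : HasDerivAt (fun x : ℝ => (N : ℝ) - (1 - x) * (1 - t)) (1 - t) x := by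
        simpa using (((hasDerivAt_id x).const_sub 1).mul_const (1 - t)).const_sub (N : ℝ)
      refine (h1.div h2 (hpos x hx).ne').congr_deriv ?_
      unfold rdens
      congr 1
      ring
    · apply ContinuousOn.intervalIntegrable
      rwa [uIcc_of_le zero_le_one]
  · exact hcont.integrableOn_Icc
  · filter_upwards with x
    unfold rdens
    refine div_nonneg (mul_nonneg (by linarith) (by linarith [ht.1])) (by positivity)

lemma iter_irr (N : ℕ) (hN : 2 ≤ N) (n : ℕ) (x : ℝ) (h0 : x ∈ Set.Icc (0 : ℝ) 1)
    (hx : Irrational x) :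
    (RN N)^[n] x ∈ Set.Icc (0 : ℝ) 1 ∧ Irrational ((RN N)^[n] x) := by
  induction n with
  | zero => exact ⟨h0, hx⟩
  | succ n ih =>
    rw [Function.iterate_succ_apply']
    exact RN_irr N hN _ ih.2

lemma sRec_mem (N : ℕ) (hN : 2 ≤ N) (t : ℝ) (ht : t ∈ Set.Icc (0 : ℝ) 1)
    (a : ℕ → ℤ) (n : ℕ) (ha : ∀ k < n, (N : ℤ) ≤ a k) :
    sRec N t a n ∈ Set.Icc (0 : ℝ) 1 := by
  induction n with
  | zero => exact ht
  | succ n ih =>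
    exact sstep_mem N hN _ (ha n (by omega)) _ (ih fun k hk => ha k (by omega))

lemma n_step (N : ℕ) (hN : 2 ≤ N) (t : ℝ) (ht : t ∈ Set.Icc (0 : ℝ) 1)
    (a : ℕ → ℤ) (n : ℕ) (ha : ∀ k < n, (N : ℤ) ≤ a k) :
    ∃ K : ENNReal, ∀ C : Set ℝ, MeasurableSet C → C ⊆ Set.Icc (0 : ℝ) 1 →
      rhoT N t ((RN N)^[n] ⁻¹' C ∩ cyl N n a) = K * rhoT N (sRec N t a n) C := by
  induction n with
  | zero =>
    refine ⟨1, fun C hC hC1 => ?_⟩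
    have hirr : rhoT N t ({x | Irrational x}ᶜ) = 0 := by
      have hac : rhoT N t ≪ volume :=
        (withDensity_absolutelyContinuous _ _).trans Measure.restrict_le_self.absolutelyContinuous
      apply hac
      have h : {x : ℝ | Irrational x}ᶜ = Set.range ((↑) : ℚ → ℝ) := by
        ext x
        simp [Irrational]
      rw [h]
      exact (Set.countable_range _).measure_zero _
    have : (RN N)^[0] ⁻¹' C ∩ cyl N 0 a = C ∩ {x | Irrational x} := by
      ext x
      simp only [cyl, Function.iterate_zero, preimage_id, mem_inter_iff, mem_setOf_eq]
      exact ⟨fun h => ⟨h.1, h.2.2.1⟩, fun h => ⟨h.1, hC1 h.1, h.2, by simp⟩⟩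
    rw [this, one_mul]
    exact measure_inter_conull hirr
  | succ n ih =>
    obtain ⟨K, hK⟩ := ih fun k hk => ha k (by omega)
    have hs := sRec_mem N hN t ht a n fun k hk => ha k (by omega)
    refine ⟨K * ENNReal.ofReal (((N : ℝ) - 1 + sRec N t a n) /
      ((a n + sRec N t a n - 1) * (a n + sRec N t a n))), fun C hC hC1 => ?_⟩
    · have hset : (RN N)^[n + 1] ⁻¹' C ∩ cyl N (n + 1) a
          = (RN N)^[n] ⁻¹' (stepSet N (a n) C) ∩ cyl N n a := by
        ext x
        simp only [cyl, mem_inter_iff, mem_preimage, mem_setOf_eq, stepSet,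
          Function.iterate_succ_apply']
        constructor
        · rintro ⟨h1, h2, h3, h4⟩
          have := iter_irr N hN n x h2 h3
          exact ⟨⟨this.1, this.2, h4 n (by omega), h1⟩, h2, h3, fun k hk => h4 k (by omega)⟩
        · rintro ⟨⟨-, -, h5, h6⟩, h2, h3, h4⟩
          refine ⟨h6, h2, h3, fun k hk => ?_⟩
          rcases Nat.lt_succ_iff_lt_or_eq.mp hk with h | rfl
          · exact h4 k h
          · exact h5
      rw [hset, hK _ (stepSet_meas N _ C hC) (fun x hx => hx.1),
        one_step N hN _ (ha n (by omega)) _ hs C hC hC1, ← mul_assoc]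
      rfl

theorem stmt1 (N : ℕ) (hN : 2 ≤ N) (t : ℝ) (ht : t ∈ Set.Icc (0 : ℝ) 1)
    (n : ℕ) (hn : 1 ≤ n) (a : ℕ → ℤ) (ha : ∀ k < n, (N : ℤ) ≤ a k)
    (C : Set ℝ) (hC : MeasurableSet C) (hC1 : C ⊆ Set.Icc (0 : ℝ) 1) :
    (rhoT N t ((RN N)^[n] ⁻¹' C ∩ cyl N n a)).toReal
      = (rhoT N t (cyl N n a)).toReal * (rhoT N (sRec N t a n) C).toReal := by
  obtain ⟨K, hK⟩ := n_step N hN t ht a n ha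
  have h1 := hK _ measurableSet_Icc subset_rfl
  rw [total_mass N hN _ (sRec_mem N hN t ht a n ha), mul_one, inter_eq_right.mpr] at h1
  · rw [hK C hC hC1, h1, ENNReal.toReal_mul]
  · intro x hx
    exact (iter_irr N hN n x hx.1 hx.2.1).1
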